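/- Let u₁, …, u_n ∈ Q be any finite sequence of elements of the form u_j = ∑_{i=0}^{k_j} p_{j,i}·W_i with p_{j,i} ∈ ℝ[λ] and p_{j,i}(0) = 0. Then there exist K ∈ ℕ and polynomials P₀, P₁, …, P_K ∈ ℝ[λ] with P_i(0) = 0 such that exp(u₁)·exp(u₂)⋯exp(u_n) = exp(P₀·W₀)·exp(P₁·W₁)⋯exp(P_K·W_K) holds in Q, where the factors on the right appear in increasing order of the index of W. -/

import Mathlib

open Polynomial

/-- Relation on `D[λ]` whose ring-congruence closure corresponds to the two-sided ideal
generated by `λ^{m₀+1}`; `Q := RingQuot (lamRel D m₀)` is the quotient `D[λ]/(λ^{m₀+1})`. -/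
def lamRel (D : Type*) [Ring D] (m₀ : ℕ) : Polynomial D → Polynomial D → Prop :=
  fun a b => a = X ^ (m₀ + 1) ∧ b = 0

/-- The polynomial `p(λ)·W_i ∈ D[λ]` for `p ∈ ℝ[λ]`. -/
noncomputable def pW {D : Type*} [Ring D] [Algebra ℝ D] (W : ℕ → D)
    (p : Polynomial ℝ) (i : ℕ) : Polynomial D :=
  p.map (algebraMap ℝ D) * C (W i)

/-- The quotient map `D[λ] → Q = D[λ]/(λ^{m₀+1})`. -/
noncomputable def toQ {D : Type*} [Ring D] [Algebra ℝ D] (m₀ : ℕ) :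
    Polynomial D →+* RingQuot (lamRel D m₀) := RingQuot.mkRingHom _

/-- The truncated exponential `exp(u) = ∑_{j=0}^{m₀} u^j/j!` in `Q`. -/
noncomputable def expQ {D : Type*} [Ring D] [Algebra ℝ D] {m₀ : ℕ}
    (u : RingQuot (lamRel D m₀)) : RingQuot (lamRel D m₀) :=
  ∑ j ∈ Finset.range (m₀ + 1), (j.factorial : ℝ)⁻¹ • u ^ j

/-!
Let `δ = λ d/dλ` on `Q`. For a product `g` of exponentials of elements of the Lie algebra `N`
spanned by the `p · W_i` with `p(0) = 0`, the logarithmic derivative `δ(g) g⁻¹` lies in `N`, since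
`N` is stable under `δ` and under conjugation by the exponentials. If an ordered product `o` agrees
with `g` modulo `λ ^ k`, then modulo `λ ^ (k + 1)` the difference `g - o` is `1 / k` times the
difference of the two logarithmic derivatives, because `δ` multiplies `λ ^ k` by `k`. Hence the
leading term of `g - o` is a sum of elements `p · W_i`, and adding these to the exponents of `o`
gives an ordered product that agrees with `g` modulo `λ ^ (k + 1)`. The process ends at
`k = m₀ + 1`.
-/

open IsNilpotent Finset

section Conjugation

attribute [local instance] LieRing.ofAssociativeRing

theorem iSup_lie_mem {R L ι : Type*} [CommRing R] [LieRing L] [LieAlgebra R L]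
    {M : ι → Submodule R L} (hM : ∀ i j, ∀ a ∈ M i, ∀ b ∈ M j, ⁅a, b⁆ ∈ ⨆ i, M i)
    {a b : L} (ha : a ∈ ⨆ i, M i) (hb : b ∈ ⨆ i, M i) : ⁅a, b⁆ ∈ ⨆ i, M i := by
  have le_comap {c : L} (h : ∀ j, ∀ d ∈ M j, ⁅c, d⁆ ∈ ⨆ i, M i) :
      ⨆ i, M i ≤ (⨆ i, M i).comap (LieAlgebra.ad R L c) :=
    iSup_le h
  refine le_comap (fun i c hc => ?_) hb
  rw [← lie_skew]
  exact neg_mem (le_comap (fun j d hd => hM i j c hc d hd) ha)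

theorem apply_mem_iSup {R M ι : Type*} [Semiring R] [AddCommMonoid M] [Module R M]
    {f : Module.End R M} {N : ι → Submodule R M} (hN : ∀ i, ∀ x ∈ N i, f x ∈ N i) {x : M}
    (hx : x ∈ ⨆ i, N i) : f x ∈ ⨆ i, N i :=
  iSup_le (a := (⨆ i, N i).comap f) (fun i _ hy => Submodule.mem_iSup_of_mem i (hN i _ hy)) hx

theorem exp_apply_sub_mem {M : Type*} [AddCommGroup M] [Module ℚ M] {T : Module.End ℚ M}
    (hT : IsNilpotent T) {N : Submodule ℚ M} (hN : ∀ z ∈ N, T z ∈ N) {y : M} (hy : T y ∈ N) :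
    exp T y - y ∈ N := by
  obtain ⟨n, hn⟩ := hT
  rw [exp_eq_sum (pow_eq_zero_of_le n.le_succ hn), sum_range_succ']
  simp only [LinearMap.add_apply, LinearMap.sum_apply, LinearMap.smul_apply, pow_zero,
    Nat.factorial_zero, Nat.cast_one, inv_one, one_smul, Module.End.one_apply,
    add_sub_cancel_right, pow_succ T, Module.End.mul_apply]
  exact N.sum_mem fun i _ => N.smul_mem _ (Module.End.pow_apply_mem_of_forall_mem i hN _ hy)

variable {A : Type*} [Ring A] [Algebra ℚ A] {δ : Module.End ℚ A} {N : Submodule ℚ A} {u : A}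

theorem exp_ad_apply (hu : IsNilpotent u) (y : A) :
    exp (LieAlgebra.ad ℚ A u) y = exp u * y * exp (-u) := by
  have hl : IsNilpotent (LinearMap.mulLeft ℚ u) := (LinearMap.isNilpotent_mulLeft_iff ℚ u).2 hu
  have hr : IsNilpotent (LinearMap.mulRight ℚ (-u)) :=
    (LinearMap.isNilpotent_mulRight_iff ℚ (-u)).2 hu.neg
  have exp_left (z : A) : exp (LinearMap.mulLeft ℚ u) z = exp u * z := by
    obtain ⟨n, hn⟩ := hu
    rw [exp_eq_sum (k := n) (by simp [LinearMap.pow_mulLeft, hn]), exp_eq_sum hn]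
    simp [LinearMap.pow_mulLeft, sum_mul]
  have exp_right (z : A) : exp (LinearMap.mulRight ℚ (-u)) z = z * exp (-u) := by
    obtain ⟨n, hn⟩ := hu.neg
    rw [exp_eq_sum (k := n) (by simp [LinearMap.pow_mulRight, hn]), exp_eq_sum hn]
    simp [LinearMap.pow_mulRight, mul_sum]
  have had : LieAlgebra.ad ℚ A u = LinearMap.mulLeft ℚ u + LinearMap.mulRight ℚ (-u) := by
    ext z
    simp [Ring.lie_def, sub_eq_add_neg]
  rw [had, exp_add_of_commute (LinearMap.commute_mulLeft_right u (-u)) hl hr,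
    Module.End.mul_apply, exp_right, exp_left, mul_assoc]

theorem exp_mul_mul_exp_neg_sub_mem (hu : IsNilpotent u) (hN : ∀ z ∈ N, ⁅u, z⁆ ∈ N) {y : A}
    (hy : ⁅u, y⁆ ∈ N) : exp u * y * exp (-u) - y ∈ N := by
  rw [← exp_ad_apply hu]
  exact exp_apply_sub_mem (LieAlgebra.ad_nilpotent_of_nilpotent hu) hN hy

/- Conjugating the operator `δ` by left multiplication with `exp u` changes it by left
multiplication with an element of `N`; evaluate at `exp u`, where `exp (-u) * exp u = 1` is killed
by `δ`. -/
theorem exists_mem_derivation_exp_eq_mul (hδ : ∀ a b, δ (a * b) = δ a * b + a * δ b)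
    (hu : IsNilpotent u) (hN : ∀ z ∈ N, ⁅u, z⁆ ∈ N) (hδu : δ u ∈ N) :
    ∃ l ∈ N, δ (exp u) = l * exp u := by
  let φ := Algebra.lmul ℚ A
  have lie_map (z : A) (hz : z ∈ N) : ⁅φ u, φ z⁆ ∈ N.map φ.toLinearMap :=
    ⟨⁅u, z⁆, hN z hz, by simp [Ring.lie_def]⟩
  have lie_δ : ⁅φ u, δ⁆ ∈ N.map φ.toLinearMap :=
    ⟨-δ u, N.neg_mem hδu, by ext z; simp [φ, Ring.lie_def, hδ]⟩
  obtain ⟨l, hl, hconj⟩ := exp_mul_mul_exp_neg_sub_mem (hu.map φ)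
    (by rintro _ ⟨z, hz, rfl⟩; exact lie_map z hz) lie_δ
  rw [← map_neg, ← map_exp hu φ, ← map_exp hu.neg φ] at hconj
  have δ_one : δ 1 = 0 := by simpa using hδ 1 1
  have heval : l * exp u = -δ (exp u) := by
    simpa [φ, exp_neg_mul_exp_self hu, δ_one] using LinearMap.congr_fun hconj (exp u)
  exact ⟨-l, N.neg_mem hl, by rw [neg_mul, heval, neg_neg]⟩

theorem exists_mem_derivation_prod_exp_eq_mul (hδ : ∀ a b, δ (a * b) = δ a * b + a * δ b)
    (hNlie : ∀ a ∈ N, ∀ b ∈ N, ⁅a, b⁆ ∈ N) (hNδ : ∀ a ∈ N, δ a ∈ N) (s : List A)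
    (hs : ∀ v ∈ s, v ∈ N) (hnil : ∀ v ∈ s, IsNilpotent v) :
    ∃ l ∈ N, δ (s.map exp).prod = l * (s.map exp).prod := by
  induction s with
  | nil => exact ⟨0, N.zero_mem, by simpa using hδ 1 1⟩
  | cons u s ih =>
    rw [List.forall_mem_cons] at hs hnil
    obtain ⟨l, hl, hδs⟩ := ih hs.2 hnil.2
    obtain ⟨m, hm, hδu⟩ :=
      exists_mem_derivation_exp_eq_mul hδ hnil.1 (hNlie u hs.1) (hNδ u hs.1)
    have conj_mem : exp u * l * exp (-u) ∈ N := by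
      simpa using N.add_mem
        (exp_mul_mul_exp_neg_sub_mem hnil.1 (hNlie u hs.1) (hNlie u hs.1 l hl)) hl
    refine ⟨m + exp u * l * exp (-u), N.add_mem hm conj_mem, ?_⟩
    rw [List.map_cons, List.prod_cons, hδ, hδu, hδs, add_mul, mul_assoc (exp u * l),
      ← mul_assoc (exp (-u)), exp_neg_mul_exp_self hnil.1]
    simp only [mul_assoc, one_mul]

end Conjugation

section EulerDerivation

theorem mul_mem_pow_add {A : Type*} [Ring A] {I : Ideal A} [I.IsTwoSided] {m n : ℕ} {a b : A}
    (ha : a ∈ I ^ m) (hb : b ∈ I ^ n) : a * b ∈ I ^ (m + n) := by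
  rw [Ideal.IsTwoSided.pow_add]
  exact Ideal.mul_mem_mul ha hb

variable {A : Type*} [Ring A] [Algebra ℚ A]

/-- An Euler derivation with respect to an ideal `I`: a derivation inducing the identity on
`I / I ^ 2`. It acts on `I ^ k / I ^ (k + 1)` as multiplication by `k`, as `λ d/dλ` does on power
series in `λ`. -/
structure IsEulerDerivation (δ : Module.End ℚ A) (I : Ideal A) : Prop where
  leibniz : ∀ a b, δ (a * b) = δ a * b + a * δ b
  apply_sub_mem : ∀ a ∈ I, δ a - a ∈ I ^ 2

namespace IsEulerDerivation

variable {δ : Module.End ℚ A} {I : Ideal A} [I.IsTwoSided] {k : ℕ} {a : A}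

theorem apply_sub_smul_mem_pow (h : IsEulerDerivation δ I) (hk : k ≠ 0) (ha : a ∈ I ^ k) :
    δ a - (k : ℚ) • a ∈ I ^ (k + 1) := by
  induction k, Nat.one_le_iff_ne_zero.2 hk using Nat.le_induction generalizing a with
  | base => simpa using h.apply_sub_mem a (by simpa [Submodule.pow_one] using ha)
  | succ k hk1 ih =>
    rw [Submodule.pow_succ] at ha
    refine Submodule.mul_induction_on ha (fun x hx y hy => ?_) fun x y hx hy => ?_
    · have split : δ (x * y) - ((k + 1 : ℕ) : ℚ) • (x * y) =
          (δ x - (k : ℚ) • x) * y + x * (δ y - y) := by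
        rw [h.leibniz, Nat.cast_succ, add_smul, one_smul, sub_mul, mul_sub, smul_mul_assoc]
        abel
      rw [split]
      refine add_mem ?_ (mul_mem_pow_add (m := k) hx (h.apply_sub_mem y hy))
      rw [Submodule.pow_succ]
      exact Ideal.mul_mem_mul (ih (Nat.one_le_iff_ne_zero.1 hk1) hx) hy
    · rw [map_add, smul_add, add_sub_add_comm]
      exact add_mem hx hy

theorem apply_mem_pow (h : IsEulerDerivation δ I) (hk : k ≠ 0) (ha : a ∈ I ^ k) :
    δ a ∈ I ^ k := by
  rw [← sub_add_cancel (δ a) ((k : ℚ) • a)]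
  exact add_mem (Ideal.pow_le_pow_right k.le_succ (h.apply_sub_smul_mem_pow hk ha))
    (Submodule.smul_of_tower_mem _ _ ha)

theorem aeval_sub_eval_smul_mem_pow (h : IsEulerDerivation δ I) (hk : k ≠ 0) (ha : a ∈ I ^ k)
    (q : ℚ[X]) : aeval δ q a - q.eval (k : ℚ) • a ∈ I ^ (k + 1) := by
  obtain ⟨r, hr⟩ := X_sub_C_dvd_sub_C_eval (a := (k : ℚ)) (p := q)
  have factor : aeval δ q a - q.eval (k : ℚ) • a = aeval δ r (δ a - (k : ℚ) • a) := by
    simpa only [mul_comm (X - _), map_sub, map_mul, aeval_X, aeval_C, Module.End.mul_apply,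
      LinearMap.sub_apply, Module.algebraMap_end_apply] using
      LinearMap.congr_fun (congrArg (aeval δ) hr) a
  rw [factor]
  exact aeval_apply_smul_mem_of_le_comap (q := (I ^ (k + 1)).restrictScalars ℚ)
    (h.apply_sub_smul_mem_pow hk ha) r δ fun b hb => h.apply_mem_pow k.succ_ne_zero hb

theorem aeval_prod_mem_pow (h : IsEulerDerivation δ I) (ha : a ∈ I) (m : ℕ) :
    aeval δ (∏ j ∈ range m, (X - C ((j : ℚ) + 1))) a ∈ I ^ (m + 1) := by
  induction m with
  | zero => simpa [Submodule.pow_one] using ha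
  | succ m ih =>
    rw [prod_range_succ, mul_comm, map_mul, Module.End.mul_apply, map_sub, aeval_X, aeval_C,
      LinearMap.sub_apply, Module.algebraMap_end_apply, ← Nat.cast_succ]
    exact h.apply_sub_smul_mem_pow m.succ_ne_zero ih

theorem exists_eval_eq_one_aeval_mem_pow (h : IsEulerDerivation δ I) (hk : k ≠ 0) :
    ∃ q : ℚ[X], q.eval (k : ℚ) = 1 ∧ ∀ a ∈ I, aeval δ q a ∈ I ^ k := by
  obtain ⟨m, rfl⟩ := Nat.exists_eq_succ_of_ne_zero hk
  let q : ℚ[X] := ∏ j ∈ range m, (X - C ((j : ℚ) + 1))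
  have eval_ne_zero : q.eval ((m + 1 : ℕ) : ℚ) ≠ 0 := by
    rw [eval_prod, prod_ne_zero_iff]
    intro j hj
    rw [eval_sub, eval_X, eval_C, sub_ne_zero, Nat.cast_succ]
    exact_mod_cast (Nat.succ_lt_succ (mem_range.1 hj)).ne'
  refine ⟨C (q.eval ((m + 1 : ℕ) : ℚ))⁻¹ * q, ?_, fun a ha => ?_⟩
  · rw [eval_mul, eval_C, inv_mul_cancel₀ eval_ne_zero]
  · rw [map_mul, aeval_C, Module.End.mul_apply, Module.algebraMap_end_apply]
    exact Submodule.smul_of_tower_mem _ _ (h.aeval_prod_mem_pow ha m)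

/- Apply to each summand of `l` a polynomial in `δ` that maps `I` to `I ^ k` and induces the
identity on `I ^ k / I ^ (k + 1)`. -/
theorem exists_finsupp_mem_pow {ι : Type*} {M : ι → Submodule ℚ A}
    (h : IsEulerDerivation δ I) (hMI : ∀ i, ∀ a ∈ M i, a ∈ I) (hMδ : ∀ i, ∀ a ∈ M i, δ a ∈ M i)
    (hk : k ≠ 0) {l : A} (hlM : l ∈ ⨆ i, M i) (hl : l ∈ I ^ k) :
    ∃ c : ι →₀ A, (∀ i, c i ∈ M i ∧ c i ∈ I ^ k) ∧ (c.sum fun _ a => a) - l ∈ I ^ (k + 1) := by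
  obtain ⟨q, hqk, hq⟩ := h.exists_eval_eq_one_aeval_mem_pow hk
  obtain ⟨f, hf, rfl⟩ := (Submodule.mem_iSup_iff_exists_finsupp M l).1 hlM
  refine ⟨f.mapRange (aeval δ q) (map_zero _), fun i => ?_, ?_⟩
  · rw [Finsupp.mapRange_apply]
    exact ⟨aeval_apply_smul_mem_of_le_comap (hf i) q δ (hMδ i), hq _ (hMI i _ (hf i))⟩
  · rw [Finsupp.sum_mapRange_index fun _ => rfl, ← map_finsuppSum]
    simpa [hqk] using h.aeval_sub_eval_smul_mem_pow hk hl q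

theorem sub_sub_inv_smul_mem_pow (h : IsEulerDerivation δ I) (hk : k ≠ 0) {x y l m : A}
    (hx : δ x = l * x) (hy : δ y = m * y) (hl : l ∈ I) (hyu : IsUnit y) (hy1 : y - 1 ∈ I)
    (hxy : x - y ∈ I ^ k) : x - y - (k : ℚ)⁻¹ • (l - m) ∈ I ^ (k + 1) := by
  have hδ : δ (x - y) = l * (x - y) + (l - m) * y := by
    rw [map_sub, hx, hy]
    noncomm_ring
  have l_mul_mem : l * (x - y) ∈ I ^ (k + 1) := by
    rw [Ideal.IsTwoSided.pow_succ]
    exact Ideal.mul_mem_mul hl hxy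
  have l_sub_m_mem : l - m ∈ I ^ k := by
    obtain ⟨u, rfl⟩ := hyu
    have : (l - m) * u ∈ I ^ k := by
      rw [← sub_eq_of_eq_add' hδ]
      exact sub_mem (h.apply_mem_pow hk hxy) (Ideal.mul_mem_left _ l hxy)
    simpa using Ideal.mul_mem_right (↑u⁻¹) _ this
  have split : (k : ℚ) • (x - y) - (l - m) =
      l * (x - y) + (l - m) * (y - 1) - (δ (x - y) - (k : ℚ) • (x - y)) := by
    rw [hδ]
    noncomm_ring
  have hk' : (k : ℚ) ≠ 0 := Nat.cast_ne_zero.2 hk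
  rw [← inv_smul_smul₀ hk' (x - y), ← smul_sub, split]
  refine Submodule.smul_of_tower_mem _ _
    (sub_mem (add_mem l_mul_mem ?_) (h.apply_sub_smul_mem_pow hk hxy))
  rw [Submodule.pow_succ]
  exact Ideal.mul_mem_mul l_sub_m_mem hy1

end IsEulerDerivation

end EulerDerivation

section Perturbation

variable {A : Type*} [Ring A] {I : Ideal A} {n k : ℕ} {a b : A}

theorem isNilpotent_of_mem_of_pow_eq_bot (hI : I ^ n = ⊥) (ha : a ∈ I) : IsNilpotent a :=
  ⟨n, by simpa [hI] using Ideal.pow_mem_pow ha n⟩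

variable [I.IsTwoSided]

theorem add_pow_sub_pow_mem_pow (hk : k ≠ 0) (ha : a ∈ I) (hb : b ∈ I ^ k) (j : ℕ) :
    (a + b) ^ (j + 1) - a ^ (j + 1) ∈ I ^ (k + j) := by
  induction j with
  | zero => simpa using hb
  | succ j ih =>
    have split : (a + b) ^ (j + 2) - a ^ (j + 2) =
        (a + b) * ((a + b) ^ (j + 1) - a ^ (j + 1)) + b * a ^ (j + 1) := by
      rw [pow_succ' (a + b) (j + 1), pow_succ' a (j + 1)]
      noncomm_ring
    rw [split]
    refine add_mem ?_ (mul_mem_pow_add hb (Ideal.pow_mem_pow ha _))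
    rw [← add_assoc, Ideal.IsTwoSided.pow_succ]
    exact Ideal.mul_mem_mul (add_mem ha (Ideal.pow_le_self hk hb)) ih

variable [Algebra ℚ A]

theorem exp_add_sub_exp_sub_mem_pow (hI : I ^ n = ⊥) (hk : k ≠ 0) (ha : a ∈ I)
    (hb : b ∈ I ^ k) :
    exp (a + b) - exp a - b ∈ I ^ (k + 1) := by
  have pow_eq_zero (c : A) (hc : c ∈ I) : c ^ (n + 2) = 0 :=
    pow_eq_zero_of_le (Nat.le_add_right n 2) (by simpa [hI] using Ideal.pow_mem_pow hc n)
  have expand : exp (a + b) - exp a - b =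
      ∑ j ∈ range n, (((j + 2).factorial : ℚ)⁻¹) • ((a + b) ^ (j + 2) - a ^ (j + 2)) := by
    rw [exp_eq_sum (pow_eq_zero _ (add_mem ha (Ideal.pow_le_self hk hb))),
      exp_eq_sum (pow_eq_zero a ha)]
    simp only [sum_range_succ', smul_sub, sum_sub_distrib, zero_add, pow_zero, pow_one,
      Nat.factorial_zero, Nat.factorial_one, Nat.cast_one, inv_one, one_smul]
    abel
  rw [expand]
  exact sum_mem fun j _ => Submodule.smul_of_tower_mem _ _
    (Ideal.pow_le_pow_right (by lia) (add_pow_sub_pow_mem_pow hk ha hb (j + 1)))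

theorem exp_sub_one_mem (hI : I ^ n = ⊥) (ha : a ∈ I) : exp a - 1 ∈ I := by
  have := exp_add_sub_exp_sub_mem_pow (k := 1) hI one_ne_zero I.zero_mem
    (by simpa [Submodule.pow_one] using ha)
  rw [zero_add, exp_zero] at this
  rw [← sub_add_cancel (exp a - 1) a]
  exact add_mem (Ideal.pow_le_self two_ne_zero this) ha

variable {ι : Type*} {f c : ι → A}

theorem prod_exp_sub_one_mem (hI : I ^ n = ⊥) (s : List ι) (hf : ∀ i ∈ s, f i ∈ I) :
    (s.map fun i => exp (f i)).prod - 1 ∈ I := by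
  induction s with
  | nil => simp
  | cons i s ih =>
    rw [List.forall_mem_cons] at hf
    rw [List.map_cons, List.prod_cons, ← sub_add_sub_cancel _ (exp (f i)), ← mul_sub_one]
    exact add_mem (Ideal.mul_mem_left _ _ (ih hf.2)) (exp_sub_one_mem hI hf.1)

theorem prod_exp_add_sub_prod_exp_sub_sum_mem_pow (hI : I ^ n = ⊥) (hk : k ≠ 0)
    (hf : ∀ i, f i ∈ I) (hc : ∀ i, c i ∈ I ^ k) (s : List ι) :
    (s.map fun i => exp (f i + c i)).prod - (s.map fun i => exp (f i)).prod - (s.map c).sum ∈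
      I ^ (k + 1) := by
  induction s with
  | nil => simp
  | cons i s ih =>
    simp only [List.map_cons, List.prod_cons, List.sum_cons]
    set B := (s.map fun i => exp (f i + c i)).prod
    set A := (s.map fun i => exp (f i)).prod
    set S := (s.map c).sum
    have B_sub_one_mem : B - 1 ∈ I :=
      prod_exp_sub_one_mem hI s fun i _ => add_mem (hf i) (Ideal.pow_le_self hk (hc i))
    have S_mem : S ∈ I ^ k := list_sum_mem (by simpa using fun i _ => hc i)
    have split : exp (f i + c i) * B - exp (f i) * A - (c i + S) =
        (exp (f i + c i) - exp (f i) - c i) * B + exp (f i) * (B - A - S) +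
          ((exp (f i) - 1) * S + c i * (B - 1)) := by
      noncomm_ring
    rw [split]
    refine add_mem (add_mem ?_ (Ideal.mul_mem_left _ _ ih)) (add_mem ?_ ?_)
    · exact Ideal.mul_mem_right _ _ (exp_add_sub_exp_sub_mem_pow hI hk (hf i) (hc i))
    · rw [Ideal.IsTwoSided.pow_succ]
      exact Ideal.mul_mem_mul (exp_sub_one_mem hI (hf i)) S_mem
    · rw [Submodule.pow_succ]
      exact Ideal.mul_mem_mul (hc i) B_sub_one_mem

/-- The ordered product `exp (b 0) * exp (b 1) * ⋯` of the exponentials of a finitely supported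
family; it stops at the last nonzero `b i`, or at `b 0` if there is none. -/
noncomputable def orderedExp (b : ℕ →₀ A) : A :=
  ((List.range (b.support.sup id + 1)).map fun i => exp (b i)).prod

theorem prod_range_exp_eq_of_le (b : ℕ →₀ A) {K L : ℕ} (hb : b.support ⊆ range K) (hKL : K ≤ L) :
    ((List.range L).map fun i => exp (b i)).prod =
      ((List.range K).map fun i => exp (b i)).prod := by
  induction L, hKL using Nat.le_induction with
  | base => rfl
  | succ L hKL ih =>
    have hL : b L = 0 := Finsupp.notMem_support_iff.1 fun h => hKL.not_gt (mem_range.1 (hb h))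
    rw [List.prod_range_succ, ih, hL, exp_zero, mul_one]

theorem prod_range_exp_eq_orderedExp (b : ℕ →₀ A) {K : ℕ} (hb : b.support ⊆ range K) :
    ((List.range K).map fun i => exp (b i)).prod = orderedExp b := by
  rw [orderedExp, ← prod_range_exp_eq_of_le b hb (le_max_left K _),
    prod_range_exp_eq_of_le b (subset_range_sup_succ _) (le_max_right K _)]

theorem orderedExp_add_sub_orderedExp_sub_sum_mem_pow (hI : I ^ n = ⊥) (hk : k ≠ 0)
    {b c : ℕ →₀ A} (hb : ∀ i, b i ∈ I) (hc : ∀ i, c i ∈ I ^ k) :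
    orderedExp (b + c) - orderedExp b - (c.sum fun _ a => a) ∈ I ^ (k + 1) := by
  obtain ⟨K, hK⟩ := Finset.exists_nat_subset_range (b.support ∪ c.support)
  rw [union_subset_iff] at hK
  rw [← prod_range_exp_eq_orderedExp (b + c) (Finsupp.support_add.trans (union_subset hK.1 hK.2)),
    ← prod_range_exp_eq_orderedExp b hK.1,
    Finsupp.sum_of_support_subset c hK.2 _ fun _ _ => rfl]
  exact prod_exp_add_sub_prod_exp_sub_sum_mem_pow hI hk hb hc (List.range K)

end Perturbation

section OrderedDecomposition

attribute [local instance] LieRing.ofAssociativeRing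

variable {A : Type*} [Ring A] [Algebra ℚ A] {δ : Module.End ℚ A} {I : Ideal A} [I.IsTwoSided]
  {n k : ℕ} {M : ℕ → Submodule ℚ A}

theorem exists_mem_derivation_orderedExp_eq_mul {N : Submodule ℚ A}
    (hδ : ∀ a b, δ (a * b) = δ a * b + a * δ b) (hNlie : ∀ a ∈ N, ∀ b ∈ N, ⁅a, b⁆ ∈ N)
    (hNδ : ∀ a ∈ N, δ a ∈ N) {b : ℕ →₀ A} (hb : ∀ i, b i ∈ N) (hnil : ∀ i, IsNilpotent (b i)) :
    ∃ l ∈ N, δ (orderedExp b) = l * orderedExp b := by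
  simpa [orderedExp, Function.comp_def] using exists_mem_derivation_prod_exp_eq_mul hδ hNlie hNδ
    ((List.range (b.support.sup id + 1)).map b) (by simp [hb]) (by simp [hnil])

theorem IsEulerDerivation.exists_sub_orderedExp_mem_pow_succ (h : IsEulerDerivation δ I)
    (hI : I ^ n = ⊥) (hMI : ∀ i, ∀ a ∈ M i, a ∈ I) (hMδ : ∀ i, ∀ a ∈ M i, δ a ∈ M i)
    (hM : ∀ i j, ∀ a ∈ M i, ∀ b ∈ M j, ⁅a, b⁆ ∈ ⨆ i, M i) {g l : A} (hl : l ∈ ⨆ i, M i)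
    (hg : δ g = l * g) (hk : k ≠ 0) {b : ℕ →₀ A} (hb : ∀ i, b i ∈ M i)
    (hgb : g - orderedExp b ∈ I ^ k) :
    ∃ b' : ℕ →₀ A, (∀ i, b' i ∈ M i) ∧ g - orderedExp b' ∈ I ^ (k + 1) := by
  have hbI (i : ℕ) : b i ∈ I := hMI i _ (hb i)
  have hbnil (i : ℕ) : IsNilpotent (b i) := isNilpotent_of_mem_of_pow_eq_bot hI (hbI i)
  have isUnit_orderedExp : IsUnit (orderedExp b) :=
    List.prod_isUnit (by simpa using fun i _ => isUnit_exp (hbnil i))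
  obtain ⟨m, hm, hδb⟩ := exists_mem_derivation_orderedExp_eq_mul h.leibniz
    (fun _ ha _ hb => iSup_lie_mem hM ha hb) (fun _ => apply_mem_iSup hMδ)
    (fun i => Submodule.mem_iSup_of_mem i (hb i)) hbnil
  have leading_term : g - orderedExp b - (k : ℚ)⁻¹ • (l - m) ∈ I ^ (k + 1) :=
    h.sub_sub_inv_smul_mem_pow hk hg hδb (iSup_le (a := I.restrictScalars ℚ) hMI hl)
      isUnit_orderedExp (prod_exp_sub_one_mem hI _ fun i _ => hbI i) hgb
  have smul_mem : (k : ℚ)⁻¹ • (l - m) ∈ I ^ k := by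
    rw [← sub_sub_cancel (g - orderedExp b) ((k : ℚ)⁻¹ • (l - m))]
    exact sub_mem hgb (Ideal.pow_le_pow_right k.le_succ leading_term)
  obtain ⟨c, hc, hcsum⟩ := h.exists_finsupp_mem_pow hMI hMδ hk
    (Submodule.smul_mem _ _ (Submodule.sub_mem _ hl hm)) smul_mem
  refine ⟨b + c, fun i => (M i).add_mem (hb i) (hc i).1, ?_⟩
  have perturbation :=
    orderedExp_add_sub_orderedExp_sub_sum_mem_pow hI hk hbI fun i => (hc i).2
  convert sub_mem (sub_mem leading_term perturbation) hcsum using 1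
  abel

theorem IsEulerDerivation.exists_prod_exp_eq_orderedExp (h : IsEulerDerivation δ I)
    (hI : I ^ n = ⊥) (hMI : ∀ i, ∀ a ∈ M i, a ∈ I) (hMδ : ∀ i, ∀ a ∈ M i, δ a ∈ M i)
    (hM : ∀ i j, ∀ a ∈ M i, ∀ b ∈ M j, ⁅a, b⁆ ∈ ⨆ i, M i) (s : List A)
    (hs : ∀ u ∈ s, u ∈ ⨆ i, M i) :
    ∃ b : ℕ →₀ A, (∀ i, b i ∈ M i) ∧ (s.map exp).prod = orderedExp b := by
  have hsI (u : A) (hu : u ∈ s) : u ∈ I := iSup_le (a := I.restrictScalars ℚ) hMI (hs u hu)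
  obtain ⟨l, hl, hg⟩ := exists_mem_derivation_prod_exp_eq_mul h.leibniz
    (fun _ ha _ hb => iSup_lie_mem hM ha hb) (fun _ => apply_mem_iSup hMδ) s hs
    fun u hu => isNilpotent_of_mem_of_pow_eq_bot hI (hsI u hu)
  have approx (k : ℕ) :
      ∃ b : ℕ →₀ A, (∀ i, b i ∈ M i) ∧ (s.map exp).prod - orderedExp b ∈ I ^ (k + 1) := by
    induction k with
    | zero =>
      refine ⟨0, fun i => (M i).zero_mem, ?_⟩
      rw [zero_add, Submodule.pow_one, ← sub_sub_sub_cancel_right _ _ 1]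
      exact sub_mem (prod_exp_sub_one_mem hI s hsI)
        (prod_exp_sub_one_mem hI _ fun _ _ => I.zero_mem)
    | succ k ih =>
      obtain ⟨b, hb, hgb⟩ := ih
      exact h.exists_sub_orderedExp_mem_pow_succ hI hMI hMδ hM hl hg k.succ_ne_zero hb hgb
  obtain ⟨b, hb, hgb⟩ := approx n
  refine ⟨b, hb, sub_eq_zero.1 ?_⟩
  simpa [hI] using Ideal.pow_le_pow_right n.le_succ hgb

end OrderedDecomposition

section TruncatedPolynomials

theorem isTwoSided_span_singleton {R : Type*} [Semiring R] {t : R} (ht : ∀ r, Commute t r) :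
    (Ideal.span {t}).IsTwoSided := by
  refine ⟨fun r hs => ?_⟩
  obtain ⟨q, rfl⟩ := Ideal.mem_span_singleton'.1 hs
  rw [mul_assoc, (ht r).eq, ← mul_assoc]
  exact Ideal.mem_span_singleton'.2 ⟨q * r, rfl⟩

variable {D : Type*} [Ring D] [Algebra ℝ D] {m₀ : ℕ}

theorem toQ_surjective : Function.Surjective (toQ (D := D) m₀) :=
  RingQuot.mkRingHom_surjective _

theorem toQ_X_pow : toQ m₀ (X ^ (m₀ + 1) : D[X]) = 0 :=
  (RingQuot.mkRingHom_rel ⟨rfl, rfl⟩).trans (map_zero _)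

theorem toQ_real_smul (c : ℝ) (f : D[X]) : toQ m₀ (c • f) = c • toQ m₀ f := by
  rw [toQ, RingQuot.mkRingHom_def]
  rfl

theorem exists_mul_X_pow_eq_of_toQ_eq_zero {f : D[X]} (hf : toQ m₀ f = 0) :
    ∃ r, r * X ^ (m₀ + 1) = f := by
  have := isTwoSided_span_singleton fun r : D[X] => commute_X_pow r (m₀ + 1)
  let π := Ideal.Quotient.mk (Ideal.span {(X ^ (m₀ + 1) : D[X])})
  have hπ : ∀ ⦃a b⦄, lamRel D m₀ a b → π a = π b := by
    rintro _ _ ⟨rfl, rfl⟩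
    exact Ideal.Quotient.eq.2 (by simp)
  rw [← Ideal.mem_span_singleton', ← Ideal.Quotient.eq_zero_iff_mem,
    ← RingQuot.lift_mkRingHom_apply π hπ]
  exact (congrArg _ hf).trans (map_zero _)

/-- The ideal `(λ)` of `Q`. -/
noncomputable def lamIdeal (D : Type*) [Ring D] [Algebra ℝ D] (m₀ : ℕ) :
    Ideal (RingQuot (lamRel D m₀)) :=
  Ideal.span {toQ m₀ X}

theorem commute_toQ_X (q : RingQuot (lamRel D m₀)) : Commute (toQ m₀ X) q := by
  obtain ⟨f, rfl⟩ := toQ_surjective q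
  exact (commute_X f).map (toQ m₀)

instance : (lamIdeal D m₀).IsTwoSided :=
  isTwoSided_span_singleton commute_toQ_X

theorem lamIdeal_pow_eq_bot : lamIdeal D m₀ ^ (m₀ + 1) = ⊥ := by
  have : (Ideal.span {toQ (D := D) m₀ X}).IsTwoSided := isTwoSided_span_singleton commute_toQ_X
  rw [lamIdeal, Ideal.span_singleton_pow, ← map_pow, toQ_X_pow, Ideal.span_singleton_eq_bot]

theorem toQ_X_mul_mem_lamIdeal (f : D[X]) : toQ m₀ (X * f) ∈ lamIdeal D m₀ := by
  rw [map_mul]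
  exact Ideal.mul_mem_right _ _ (Ideal.mem_span_singleton_self _)

/-- The rational scalars of `Q`, obtained by restricting the real ones. -/
noncomputable abbrev ratAlgebra : Algebra ℚ (RingQuot (lamRel D m₀)) :=
  Algebra.compHom _ (algebraMap ℚ ℝ)

attribute [local instance] ratAlgebra

theorem toQ_rat_smul (c : ℚ) (f : D[X]) : toQ m₀ ((c : ℝ) • f) = c • toQ m₀ f :=
  toQ_real_smul c f

theorem expQ_eq_exp {u : RingQuot (lamRel D m₀)} (hu : u ∈ lamIdeal D m₀) : expQ u = exp u := by
  rw [exp_eq_sum (by simpa [lamIdeal_pow_eq_bot] using Ideal.pow_mem_pow hu (m₀ + 1)), expQ]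
  refine sum_congr rfl fun j _ => ?_
  rw [Algebra.compHom_smul_def]
  simp

theorem toQ_X_mul_derivative_eq_zero {f : D[X]} (hf : toQ m₀ f = 0) :
    toQ m₀ (X * derivative f) = 0 := by
  obtain ⟨r, rfl⟩ := exists_mul_X_pow_eq_of_toQ_eq_zero hf
  have factor : X * derivative (r * X ^ (m₀ + 1)) =
      (derivative r * X + r * C ((m₀ + 1 : ℕ) : D)) * X ^ (m₀ + 1) := by
    simp only [X_mul, derivative_mul, derivative_X_pow, Nat.add_sub_cancel, add_mul, mul_assoc,
      ← _root_.pow_succ, ← _root_.pow_succ']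
  rw [factor, map_mul, toQ_X_pow, mul_zero]

/-- The operator `λ d/dλ` on `Q`. -/
noncomputable def eulerOperator (D : Type*) [Ring D] [Algebra ℝ D] (m₀ : ℕ) :
    Module.End ℚ (RingQuot (lamRel D m₀)) :=
  AddMonoidHom.toRatLinearMap <|
    (toQ m₀).toAddMonoidHom.liftOfSurjective toQ_surjective
      ⟨(toQ m₀).toAddMonoidHom.comp ((AddMonoidHom.mulLeft X).comp derivative.toAddMonoidHom),
        fun _ hf => toQ_X_mul_derivative_eq_zero hf⟩

theorem eulerOperator_toQ (f : D[X]) :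
    eulerOperator D m₀ (toQ m₀ f) = toQ m₀ (X * derivative f) :=
  (toQ m₀).toAddMonoidHom.liftOfRightInverse_comp_apply _
    (Function.rightInverse_surjInv toQ_surjective)
    ⟨(toQ m₀).toAddMonoidHom.comp ((AddMonoidHom.mulLeft X).comp derivative.toAddMonoidHom),
      fun _ hf => toQ_X_mul_derivative_eq_zero hf⟩ f

theorem isEulerDerivation_eulerOperator :
    IsEulerDerivation (eulerOperator D m₀) (lamIdeal D m₀) where
  leibniz a b := by
    obtain ⟨f, rfl⟩ := toQ_surjective a
    obtain ⟨g, rfl⟩ := toQ_surjective b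
    simp only [← map_mul, ← map_add, eulerOperator_toQ, derivative_mul, X_mul, add_mul, mul_assoc]
  apply_sub_mem a ha := by
    obtain ⟨q, rfl⟩ := Ideal.mem_span_singleton'.1 ha
    obtain ⟨f, rfl⟩ := toQ_surjective q
    have factor : X * derivative (f * X) - f * X = (X * derivative f) * X := by
      rw [derivative_mul, derivative_X, mul_one, mul_add, X_mul (p := f), add_sub_cancel_right,
        mul_assoc]
    rw [← map_mul, eulerOperator_toQ, ← map_sub, factor, map_mul, Submodule.pow_succ,
      Submodule.pow_one]
    exact Ideal.mul_mem_mul (toQ_X_mul_mem_lamIdeal _) (Ideal.mem_span_singleton_self _)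

/-- The elements `p · d` of `Q`, for `p` a real polynomial in `λ` with `p(0) = 0`. -/
noncomputable def lamSpan (m₀ : ℕ) (d : D) : Submodule ℚ (RingQuot (lamRel D m₀)) where
  carrier := {q | ∃ p : ℝ[X], p.eval 0 = 0 ∧ toQ m₀ (p.map (algebraMap ℝ D) * C d) = q}
  zero_mem' := ⟨0, by simp⟩
  add_mem' := by
    rintro _ _ ⟨p, hp, rfl⟩ ⟨q, hq, rfl⟩
    exact ⟨p + q, by simp [hp, hq], by rw [Polynomial.map_add, add_mul, map_add]⟩
  smul_mem' := by
    rintro c _ ⟨p, hp, rfl⟩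
    exact ⟨(c : ℝ) • p, by simp [hp], by
      rw [Polynomial.map_smul, ← toQ_rat_smul, algebraMap_smul, smul_mul_assoc]⟩

theorem mem_lamIdeal_of_mem_lamSpan {d : D} {q : RingQuot (lamRel D m₀)} (hq : q ∈ lamSpan m₀ d) :
    q ∈ lamIdeal D m₀ := by
  obtain ⟨p, hp, rfl⟩ := hq
  obtain ⟨r, rfl⟩ := X_dvd_iff.2 ((coeff_zero_eq_eval_zero p).trans hp)
  rw [Polynomial.map_mul, map_X, mul_assoc]
  exact toQ_X_mul_mem_lamIdeal _

theorem eulerOperator_mem_lamSpan {d : D} {q : RingQuot (lamRel D m₀)} (hq : q ∈ lamSpan m₀ d) :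
    eulerOperator D m₀ q ∈ lamSpan m₀ d := by
  obtain ⟨p, -, rfl⟩ := hq
  refine ⟨X * derivative p, by simp, ?_⟩
  rw [eulerOperator_toQ]
  simp [derivative_map, mul_assoc]

theorem lamSpan_le_iSup_of_mem_span {ι : Type*} {W : ι → D} {d : D}
    (hd : d ∈ Submodule.span ℝ (Set.range W)) : lamSpan m₀ d ≤ ⨆ i, lamSpan m₀ (W i) := by
  rintro _ ⟨p, hp, rfl⟩
  induction hd using Submodule.span_induction generalizing p with
  | mem d hd =>
    obtain ⟨i, rfl⟩ := hd
    exact Submodule.mem_iSup_of_mem i ⟨p, hp, rfl⟩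
  | zero => simp
  | add d e _ _ hd he =>
    rw [C_add, mul_add, map_add]
    exact add_mem (hd p hp) (he p hp)
  | smul c d _ hd =>
    convert hd (c • p) (by simp [hp]) using 2
    rw [Polynomial.map_smul, algebraMap_smul, smul_mul_assoc, ← smul_C, mul_smul_comm]

theorem commute_map_algebraMap (p : ℝ[X]) (f : D[X]) : Commute (p.map (algebraMap ℝ D)) f :=
  letI := Polynomial.algebra ℝ D
  Algebra.commutes p f

theorem lie_mem_lamSpan {d e : D} {a b : RingQuot (lamRel D m₀)} (ha : a ∈ lamSpan m₀ d)
    (hb : b ∈ lamSpan m₀ e) : ⁅a, b⁆ ∈ lamSpan m₀ ⁅d, e⁆ := by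
  obtain ⟨p, hp, rfl⟩ := ha
  obtain ⟨q, -, rfl⟩ := hb
  refine ⟨p * q, by simp [hp], ?_⟩
  have mul_eq (p q : ℝ[X]) (d e : D) :
      p.map (algebraMap ℝ D) * C d * (q.map (algebraMap ℝ D) * C e) =
        (p * q).map (algebraMap ℝ D) * C (d * e) := by
    rw [Polynomial.map_mul, C_mul]
    exact ((commute_map_algebraMap q (C d)).symm.mul_mul_mul_comm _ _)
  rw [Ring.lie_def, Ring.lie_def, ← map_mul, ← map_mul, ← map_sub, mul_eq, mul_eq, mul_comm q p,
    ← mul_sub, C_sub]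

theorem mem_lamIdeal_of_mem_iSup_lamSpan {ι : Type*} {W : ι → D} {q : RingQuot (lamRel D m₀)}
    (hq : q ∈ ⨆ i, lamSpan m₀ (W i)) : q ∈ lamIdeal D m₀ :=
  Submodule.iSup_induction _ (motive := (· ∈ lamIdeal D m₀)) hq
    (fun _ _ => mem_lamIdeal_of_mem_lamSpan) (zero_mem _) fun _ _ => add_mem

theorem witt_ordered_decomposition_general (W : ℕ → D)
    (hW : ∀ n m : ℕ, W n * W m - W m * W n ∈ Submodule.span ℝ (Set.range W))
    (m₀ n : ℕ) (kk : Fin n → ℕ) (p : Fin n → ℕ → ℝ[X]) (hp : ∀ j i, (p j i).eval 0 = 0) :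
    ∃ (K : ℕ) (P : ℕ → ℝ[X]),
      (∀ i, (P i).eval 0 = 0) ∧
      (List.ofFn fun j : Fin n =>
          expQ (toQ m₀ (∑ i ∈ range (kk j + 1), pW W (p j i) i))).prod =
        ((List.range (K + 1)).map fun i => expQ (toQ m₀ (pW W (P i) i))).prod := by
  let u (j : Fin n) := toQ m₀ (∑ i ∈ range (kk j + 1), pW W (p j i) i)
  have hu (j : Fin n) : u j ∈ ⨆ i, lamSpan m₀ (W i) := by
    simp only [u, map_sum]
    exact sum_mem fun i _ => Submodule.mem_iSup_of_mem i ⟨p j i, hp j i, rfl⟩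
  obtain ⟨b, hb, hprod⟩ := isEulerDerivation_eulerOperator.exists_prod_exp_eq_orderedExp
    lamIdeal_pow_eq_bot (fun _ _ => mem_lamIdeal_of_mem_lamSpan)
    (fun _ _ => eulerOperator_mem_lamSpan)
    (fun i j _ ha _ hb => lamSpan_le_iSup_of_mem_span (hW i j) (lie_mem_lamSpan ha hb))
    (List.ofFn u) (by simpa using hu)
  choose P hP hPb using hb
  have left (j : Fin n) : expQ (u j) = exp (u j) :=
    expQ_eq_exp (mem_lamIdeal_of_mem_iSup_lamSpan (hu j))
  have right (i : ℕ) : expQ (toQ m₀ (pW W (P i) i)) = exp (b i) := by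
    rw [← hPb i]
    exact expQ_eq_exp (mem_lamIdeal_of_mem_lamSpan ⟨P i, hP i, rfl⟩)
  refine ⟨b.support.sup id, P, hP, ?_⟩
  simp only [right]
  rw [← orderedExp, ← hprod, List.map_ofFn]
  exact congrArg (fun f => (List.ofFn f).prod) (_root_.funext left)

end TruncatedPolynomials

/-- Under the Witt condition, any finite product of exponentials of elements
`u_j = ∑_{i=0}^{k_j} p_{j,i}·W_i` (with `p_{j,i}(0) = 0`) equals, in `Q`, an ordered
product `exp(P₀·W₀)·exp(P₁·W₁)⋯exp(P_K·W_K)` with `P_i ∈ ℝ[λ]`, `P_i(0) = 0`. -/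
theorem witt_ordered_decomposition {D : Type*} [Ring D] [Algebra ℝ D]
    (W : ℕ → D) (α : ℕ → ℕ → ℝ)
    (hW : ∀ n m : ℕ, W n * W m - W m * W n = α n m • W (n + m))
    (m₀ : ℕ) (hm₀ : 1 ≤ m₀)
    (n : ℕ) (kk : Fin n → ℕ) (p : Fin n → ℕ → Polynomial ℝ)
    (hp : ∀ j i, (p j i).eval 0 = 0) :
    ∃ (K : ℕ) (P : ℕ → Polynomial ℝ),
      (∀ i, (P i).eval 0 = 0) ∧
      (List.ofFn fun j : Fin n =>
          expQ (toQ m₀ (∑ i ∈ Finset.range (kk j + 1), pW W (p j i) i))).prod =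
        ((List.range (K + 1)).map fun i => expQ (toQ m₀ (pW W (P i) i))).prod :=
  witt_ordered_decomposition_general W
    (fun i j => hW i j ▸ Submodule.smul_mem _ _ (Submodule.subset_span ⟨i + j, rfl⟩)) m₀ n kk p hp
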